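/- Let K be a Hopf subalgebra of H and let C = kg for a grouplike element g ∈ G(H). Then the conjugate Hopf subalgebra {}^C K equals gKg^{-1}. -/

import Mathlib

open TensorProduct

namespace MackeyPaper

noncomputable section

universe v

variable (k : Type) [Field k] [CharZero k] [IsAlgClosed k]
variable (H : Type) [Ring H] [HopfAlgebra k H]

/-- A subcoalgebra of `H`: a `k`-subspace `C` with `Δ(C) ⊆ C ⊗ C`. -/
def IsSubcoalgebra (C : Submodule k H) : Prop :=
  ∀ c ∈ C, Coalgebra.comul (R := k) c ∈
    LinearMap.range (TensorProduct.map C.subtype C.subtype)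

/-- A simple (nonzero, minimal) subcoalgebra of `H`. -/
def IsSimpleSubcoalgebra (C : Submodule k H) : Prop :=
  IsSubcoalgebra k H C ∧ C ≠ ⊥ ∧
    ∀ D : Submodule k H, D ≤ C → IsSubcoalgebra k H D → D ≠ ⊥ → D = C

/-- A Hopf subalgebra of `H`: a subalgebra which is a subcoalgebra and is
stable under the antipode. -/
def IsHopfSubalgebra (K : Subalgebra k H) : Prop :=
  IsSubcoalgebra k H K.toSubmodule ∧ ∀ x ∈ K, HopfAlgebra.antipode (R := k) x ∈ K

/-- `Λ` is the (two-sided) idempotent integral of the Hopf subalgebra `K`,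
i.e. the integral normalized by `ε(Λ) = 1`. -/
def IsIdempotentIntegral (K : Subalgebra k H) (Λ : H) : Prop :=
  Λ ∈ K ∧ Coalgebra.counit (R := k) Λ = 1 ∧
    ∀ x ∈ K, x * Λ = Coalgebra.counit (R := k) x • Λ ∧
      Λ * x = Coalgebra.counit (R := k) x • Λ

/-- A cocommutative element of `H`; the cocommutative elements of `H` form
the character ring `C(H^*)`. -/
def IsCocomm (x : H) : Prop :=
  (TensorProduct.comm k H H) (Coalgebra.comul (R := k) x) = Coalgebra.comul (R := k) x

/-- The character ring `C(H^*)`, i.e. the space of cocommutative elements of `H`,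
as a `k`-subspace of `H`. -/
def charRing : Submodule k H :=
  LinearMap.ker ((TensorProduct.comm k H H).toLinearMap ∘ₗ Coalgebra.comul (R := k)
      - Coalgebra.comul (R := k))

/-- `d` is the irreducible character (of `H^*`) associated to the simple
subcoalgebra `C`: the unique cocommutative element of `C` whose counit is the
positive square root of `dim_k C`. -/
def IsCharacterOf (d : H) (C : Submodule k H) : Prop :=
  d ∈ C ∧ IsCocomm k H d ∧
    Coalgebra.counit (R := k) d = ((Nat.sqrt (Module.finrank k ↥C) : ℕ) : k)

/-- The right coset `CK` of a subcoalgebra `C`, i.e. the subspace `C·K`. -/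
def CKsub (K : Subalgebra k H) (C : Submodule k H) : Submodule k H :=
  C * K.toSubmodule

/-- The conjugate Hopf subalgebra `ᶜK` of `K` by a simple subcoalgebra `C`
(with associated irreducible character `c`): the span of all simple
subcoalgebras of `H` whose irreducible character `d` satisfies
`d·c·Λ_K = ε(d)·c·Λ_K`.  (The condition is stated for all cocommutative
elements of `C` resp. `D`; this is equivalent, since the cocommutative
elements of a simple subcoalgebra are exactly the scalar multiples of its
irreducible character.) -/
def conjK (K : Subalgebra k H) (Λ : H) (C : Submodule k H) : Submodule k H :=
  sSup {D : Submodule k H | IsSimpleSubcoalgebra k H D ∧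
    ∀ d ∈ D, IsCocomm k H d → ∀ c ∈ C, IsCocomm k H c →
      d * (c * Λ) = Coalgebra.counit (R := k) d • (c * Λ)}

/-- A complete irredundant system of representatives (by simple subcoalgebras)
of the double cosets `L\H/K`.  (Taking `L = ⊥` gives a system of
representatives of the right cosets `H/K`.) -/
def IsDoubleCosetReps (L K : Subalgebra k H) {ι : Type} (rep : ι → Submodule k H) : Prop :=
  (∀ i, IsSimpleSubcoalgebra k H (rep i)) ∧
  (∀ i j, L.toSubmodule * rep i * K.toSubmodule = L.toSubmodule * rep j * K.toSubmodule
      → i = j) ∧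
  (∀ C : Submodule k H, IsSimpleSubcoalgebra k H C →
      ∃ i, C ≤ L.toSubmodule * rep i * K.toSubmodule)

section Ind

variable (K : Subalgebra k H) (M : Type v) [AddCommGroup M] [Module k M]
  [Module ↥K M] [IsScalarTower k ↥K M]

/-- The relations defining the induced module `H ⊗_K M` as a quotient of
`H ⊗_k M`: the `H`-submodule generated by the elements `a ⊗ m - 1 ⊗ a·m`
for `a ∈ K` (equivalently, spanned by all `h·a ⊗ m - h ⊗ a·m`). -/
def indRel : Submodule H (H ⊗[k] M) :=
  Submodule.span H {z | ∃ (a : ↥K) (m : M),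
    z = (a : H) ⊗ₜ[k] m - (1 : H) ⊗ₜ[k] (a • m)}

/-- The induced module `M↑_K^H = H ⊗_K M`, a left `H`-module. -/
abbrev Ind := (H ⊗[k] M) ⧸ indRel k H K M

variable (C : Submodule k H)

/-- The underlying space `CK ⊗_k M` of which the conjugate module `ᶜM` is a
quotient. -/
def CKM : Type _ := ↥(CKsub k H K C) ⊗[k] M

instance : AddCommGroup (CKM k H K M C) :=
  inferInstanceAs (AddCommGroup (↥(CKsub k H K C) ⊗[k] M))

instance : Module k (CKM k H K M C) :=
  inferInstanceAs (Module k (↥(CKsub k H K C) ⊗[k] M))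

/-- The pure tensor `x ⊗ m` as an element of `CK ⊗_k M`. -/
def ckmk (x : ↥(CKsub k H K C)) (m : M) : CKM k H K M C := x ⊗ₜ[k] m

/-- The relations defining the conjugate module `ᶜM = CK ⊗_K M` as a quotient
of `CK ⊗_k M`: `x·a ⊗ m - x ⊗ a·m` for `a ∈ K`. -/
def conjRel : Submodule k (CKM k H K M C) :=
  Submodule.span k {z | ∃ (x : ↥(CKsub k H K C)) (a : ↥K) (m : M)
    (hxa : (x : H) * (a : H) ∈ CKsub k H K C),
    z = ckmk k H K M C ⟨(x : H) * (a : H), hxa⟩ m - ckmk k H K M C x (a • m)}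

/-- The conjugate module `ᶜM := CK ⊗_K M`. -/
abbrev ConjM := CKM k H K M C ⧸ conjRel k H K M C

/-- The canonical copy of the conjugate module `ᶜM = CK ⊗_K M` inside
`H ⊗_K M` (the image of `CK ⊗_K M` under multiplication; this is indeed a
copy of `ᶜM` since `H` is a free right `K`-module and `CK` is one of the
coset summands). -/
def conjMsub : Submodule k (Ind k H K M) :=
  Submodule.span k {z | ∃ (x : H) (_ : x ∈ CKsub k H K C) (m : M),
    z = Submodule.Quotient.mk (x ⊗ₜ[k] m)}

end Ind

section Comp

variable (L K : Subalgebra k H) (Λ : H) (C : Submodule k H)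
variable (M : Type v) [AddCommGroup M] [Module k M] [Module ↥K M] [IsScalarTower k ↥K M]

/-- The underlying space `L ⊗_k (CK ⊗_k M)`. -/
def LCM : Type _ := ↥L ⊗[k] CKM k H K M C

instance : AddCommGroup (LCM k H L K C M) :=
  inferInstanceAs (AddCommGroup (↥L ⊗[k] CKM k H K M C))

instance : Module k (LCM k H L K C M) :=
  inferInstanceAs (Module k (↥L ⊗[k] CKM k H K M C))

/-- The pure tensor `l ⊗ w` as an element of `L ⊗_k (CK ⊗_k M)`. -/
def lcmk (l : ↥L) (w : CKM k H K M C) : LCM k H L K C M := l ⊗ₜ[k] w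

/-- The relations defining `L ⊗_{L ∩ ᶜK} ᶜM` as a quotient of
`L ⊗_k (CK ⊗_k M)`: the balancedness relations over `L ∩ ᶜK` (first set),
together with (the image of) the relations defining `ᶜM = CK ⊗_K M`
(second set). -/
def compRel : Submodule k (LCM k H L K C M) :=
  Submodule.span k
    ({z | ∃ (l : ↥L) (a : H) (haL : a ∈ L) (_ : a ∈ conjK k H K Λ C)
        (x : ↥(CKsub k H K C)) (m : M) (hax : a * (x : H) ∈ CKsub k H K C),
        z = lcmk k H L K C M ⟨(l : H) * a, mul_mem l.2 haL⟩ (ckmk k H K M C x m)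
          - lcmk k H L K C M l (ckmk k H K M C ⟨a * (x : H), hax⟩ m)} ∪
     {z | ∃ (l : ↥L) (x : ↥(CKsub k H K C)) (a : ↥K) (m : M)
        (hxa : (x : H) * (a : H) ∈ CKsub k H K C),
        z = lcmk k H L K C M l (ckmk k H K M C ⟨(x : H) * (a : H), hxa⟩ m)
          - lcmk k H L K C M l (ckmk k H K M C x (a • m))})

/-- The module `L ⊗_{L ∩ ᶜK} ᶜM` (a left `L`-module via multiplication on the
first tensor factor). -/
abbrev Comp := LCM k H L K C M ⧸ compRel k H L K Λ C M

end Comp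

open DirectSum

section Mackey

variable (L K : Subalgebra k H) (Λ : H)

/-- The Mackey isomorphism property for the pair `(L, K)` at the `K`-module
`M`: for any system of double coset representatives, the left-multiplication
map `⊕_C L ⊗_{L ∩ ᶜK} ᶜM → M↑_K^H↓_L^H`, `l ⊗ v ↦ l·v`, is an isomorphism of
`L`-modules.  (A `k`-linear map satisfying the displayed formula on the
spanning elements is automatically `L`-equivariant for the evident
`L`-actions, so this property is stated for `k`-linear maps.) -/
def MackeyAt (M : Type v) [AddCommGroup M] [Module k M] [Module ↥K M]
    [IsScalarTower k ↥K M] [Module.Finite k M] : Prop :=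
  ∀ (ι : Type) [DecidableEq ι] (rep : ι → Submodule k H),
    IsDoubleCosetReps k H L K rep →
    ∃ π : (⨁ i : ι, Comp k H L K Λ (rep i) M) →ₗ[k] Ind k H K M,
      Function.Bijective π ∧
      ∀ (i : ι) (l : ↥L) (x : ↥(CKsub k H K (rep i))) (m : M),
        π (DirectSum.of (fun i => Comp k H L K Λ (rep i) M) i
            (Submodule.Quotient.mk (lcmk k H L K (rep i) M l (ckmk k H K M (rep i) x m)))) =
          Submodule.Quotient.mk (((l : H) * (x : H)) ⊗ₜ[k] m)

/-- `(L, K)` is a Mackey pair of Hopf subalgebras of `H` (here `Λ` is the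
idempotent integral of `K`): for every finite-dimensional `K`-module `M` the
left-multiplication homomorphism `π_M` is an isomorphism. -/
def IsMackeyPair : Prop :=
  ∀ (M : Type v) [AddCommGroup M] [Module k M] [Module ↥K M]
    [IsScalarTower k ↥K M] [Module.Finite k M], MackeyAt k H L K Λ M

end Mackey


section Statements

variable [FiniteDimensional k H] [IsSemisimpleRing H]

/-!
The functional `τ(h) = Tr(x ↦ h S²(x))` on a finite-dimensional semisimple Hopf algebra is a left
integral of its dual. Radford's formula for `S⁴` and the finite order of group-like elements make
`S²` an automorphism of finite order, and a positivity argument for traces of such an automorphism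
on the regular representation gives `τ(1) ≠ 0`; hence `τ` is a two-sided Haar functional.
Orthogonality for the form `τ(x S(y))` then splits off every subcoalgebra, which gives
cosemisimplicity. If a simple subcoalgebra `D` meets the Hopf subalgebra `K` trivially, its
character `χ` satisfies `τ(χ Λ_K) = 0`, whereas `τ(Λ_K) ≠ 0`; so the simple subcoalgebras whose
character acts trivially on `Λ_K` are exactly those contained in `K`. Conjugation by `g` is an
automorphism of the Hopf algebra carrying `K` and `Λ_K` to `gKg⁻¹` and `gΛ_Kg⁻¹`, and
`d g Λ_K = ε(d) g Λ_K` says that `d` acts trivially on `gΛ_Kg⁻¹`.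
-/

section ConjPairs

open Module (finrank)

section Subring

variable {E F : Type*} [Field E] [Field F]

/-- The pairs `(x, y)` of elements of `F` which come from elements of `E` whose images in `ℂ` are
complex conjugate to each other. -/
def conjPairs (τ : E →+* F) (σ : E →+* ℂ) : Subring (F × F) :=
  (RingHom.eqLocus (σ.comp (RingHom.snd E E))
    (((starRingEnd ℂ).comp σ).comp (RingHom.fst E E))).map (τ.prodMap τ)

variable {τ : E →+* F} {σ : E →+* ℂ}

lemma mem_conjPairs {x : F × F} :
    x ∈ conjPairs τ σ ↔ ∃ a b, σ b = starRingEnd ℂ (σ a) ∧ τ a = x.1 ∧ τ b = x.2 := by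
  simp [conjPairs, Prod.ext_iff, RingHom.mem_eqLocus]

lemma mk_inv_mem_conjPairs [IsAlgClosed E] [CharZero E] {ζ : F} {m : ℕ} [NeZero m]
    (hζ : ζ ^ m = 1) : (ζ, ζ⁻¹) ∈ conjPairs τ σ := by
  obtain ⟨ξ, hξ⟩ := HasEnoughRootsOfUnity.exists_primitiveRoot E m
  obtain ⟨i, -, rfl⟩ := (hξ.map_of_injective τ.injective).eq_pow_of_pow_eq_one hζ
  refine mem_conjPairs.mpr ⟨ξ ^ i, (ξ ^ i)⁻¹, ?_, map_pow τ ξ i, by simp⟩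
  rw [map_inv₀, Complex.inv_eq_conj]
  refine Complex.norm_eq_one_of_pow_eq_one (n := m) ?_ (NeZero.ne m)
  rw [← map_pow, ← pow_mul, mul_comm, pow_mul, hξ.pow_eq_one, one_pow, map_one]

/-- In `ℂ`, the products become squared absolute values. -/
lemma snd_eq_zero_of_sum_fst_mul_snd_eq_zero {ι : Type*} [Fintype ι] {x : ι → F × F}
    (hx : ∀ i, x i ∈ conjPairs τ σ) (hsum : ∑ i, (x i).1 * (x i).2 = 0) (i : ι) :
    (x i).2 = 0 := by
  choose a b hab ha hb using fun i ↦ mem_conjPairs.mp (hx i)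
  have sum_eq_zero : ∑ i, a i * b i = 0 := τ.injective (by simpa [ha, hb] using hsum)
  have normSq_sum : ∑ i, Complex.normSq (σ (a i)) = 0 := by
    have h := congrArg σ sum_eq_zero
    simp only [map_sum, map_mul, hab, Complex.mul_conj, map_zero] at h
    exact_mod_cast h
  have h := (Finset.sum_eq_zero_iff_of_nonneg fun i _ ↦ Complex.normSq_nonneg _).mp normSq_sum i
    (Finset.mem_univ i)
  have hb0 : b i = 0 := σ.injective (by rw [hab, Complex.normSq_eq_zero.mp h, map_zero, map_zero])
  rw [← hb, hb0, map_zero]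

end Subring

section Trace

variable {F V : Type*} [Field F] [AddCommGroup V] [Module F V]

lemma eigenvalue_pow_eq_one {f : Module.End F V} {m : ℕ} (hf : f ^ m = 1) {μ : F}
    (hμ : f.HasEigenvalue μ) : μ ^ m = 1 := by
  obtain ⟨x, hx⟩ := hμ.exists_hasEigenvector
  have h := hx.pow_apply m
  rw [hf, Module.End.one_apply] at h
  exact smul_left_injective F hx.2 (h.symm.trans (one_smul F x).symm)

variable [FiniteDimensional F V]

lemma trace_eq_sum_finrank_eigenspace {f T : Module.End F V} (hf : ⨆ μ, f.eigenspace μ = ⊤)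
    {t : F → F} (hT : ∀ μ, ∀ x ∈ f.eigenspace μ, T x = t μ • x) :
    LinearMap.trace F V T = ∑ μ : f.Eigenvalues, (finrank F (f.eigenspace μ) : F) * t μ := by
  classical
  have iSup_eq_top : ⨆ μ : f.Eigenvalues, f.eigenspace μ = ⊤ := by
    refine eq_top_iff.mpr (hf.ge.trans (iSup_le fun μ ↦ ?_))
    rcases eq_or_ne (f.eigenspace μ) ⊥ with h | h
    · exact h.trans_le bot_le
    · exact le_iSup (fun ν : f.Eigenvalues ↦ f.eigenspace ν) ⟨μ, Module.End.hasEigenvalue_iff.mpr h⟩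
  have internal : DirectSum.IsInternal fun μ : f.Eigenvalues ↦ f.eigenspace μ :=
    DirectSum.isInternal_submodule_of_iSupIndep_of_iSup_eq_top
      (f.eigenspaces_iSupIndep.comp Subtype.val_injective) iSup_eq_top
  have maps (μ : f.Eigenvalues) : Set.MapsTo T (f.eigenspace μ) (f.eigenspace μ) := fun x hx ↦ by
    rw [hT μ x hx]
    exact Submodule.smul_mem _ _ hx
  have restrict_eq (μ : f.Eigenvalues) : T.restrict (maps μ) = t μ • LinearMap.id :=
    LinearMap.ext fun x ↦ Subtype.ext (hT μ x x.2)
  simp [LinearMap.trace_eq_sum_trace_restrict internal maps, restrict_eq, mul_comm]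

lemma iSup_eigenspace_eq_top_of_pow_eq_one [IsAlgClosed F] [CharZero F] {f : Module.End F V}
    {m : ℕ} (hm : m ≠ 0) (hf : f ^ m = 1) : ⨆ μ, f.eigenspace μ = ⊤ := by
  have squarefree : Squarefree (Polynomial.X ^ m - 1 : Polynomial F) :=
    (Polynomial.X_pow_sub_one_separable_iff.mpr (Nat.cast_ne_zero.mpr hm)).squarefree
  exact (Module.End.isSemisimple_of_squarefree_aeval_eq_zero squarefree
    (by simp [hf])).iSup_eigenspace_eq_top

variable {E : Type*} [Field E] [IsAlgClosed E] [CharZero E] [IsAlgClosed F] [CharZero F]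
  {τ : E →+* F} {σ : E →+* ℂ}

lemma trace_inv_mem_conjPairs {f : (Module.End F V)ˣ} (hf : IsOfFinOrder f) :
    (LinearMap.trace F V f, LinearMap.trace F V ↑f⁻¹) ∈ conjPairs τ σ := by
  obtain ⟨m, hm, hfm⟩ := isOfFinOrder_iff_pow_eq_one.mp hf
  have : NeZero m := ⟨hm.ne'⟩
  have hfm' : (f : Module.End F V) ^ m = 1 := by
    rw [← Units.val_pow_eq_pow_val, hfm, Units.val_one]
  have apply_eq (μ : F) (x : V) (hx : x ∈ Module.End.eigenspace (f : Module.End F V) μ) :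
      (f : Module.End F V) x = μ • x := Module.End.mem_eigenspace_iff.mp hx
  have inv_apply_eq (μ : F) (x : V) (hx : x ∈ Module.End.eigenspace (f : Module.End F V) μ) :
      (↑f⁻¹ : Module.End F V) x = μ⁻¹ • x := by
    have hx' : μ • (↑f⁻¹ : Module.End F V) x = x := by
      rw [← map_smul, ← apply_eq μ x hx, ← Module.End.mul_apply, f.inv_mul, Module.End.one_apply]
    rcases eq_or_ne μ 0 with rfl | hμ
    · rw [zero_smul] at hx'
      rw [← hx', map_zero, smul_zero]
    · rw [eq_inv_smul_iff₀ hμ, hx']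
  have sum_mem := (conjPairs τ σ).sum_mem (t := Finset.univ)
    fun (μ : Module.End.Eigenvalues (f : Module.End F V)) _ ↦
    (conjPairs τ σ).mul_mem
      (natCast_mem _ (finrank F (Module.End.eigenspace (f : Module.End F V) μ)))
      (mk_inv_mem_conjPairs (eigenvalue_pow_eq_one hfm' μ.2))
  convert sum_mem using 1
  rw [trace_eq_sum_finrank_eigenspace (iSup_eigenspace_eq_top_of_pow_eq_one hm.ne' hfm') apply_eq,
    trace_eq_sum_finrank_eigenspace (iSup_eigenspace_eq_top_of_pow_eq_one hm.ne' hfm') inv_apply_eq]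
  ext <;> simp only [Prod.fst_sum, Prod.snd_sum, Prod.fst_mul, Prod.snd_mul, Prod.fst_natCast,
    Prod.snd_natCast] <;> rfl

/-- An operator of finite order up to scalars can be rescaled to have finite order. -/
lemma exists_trace_inv_mem_conjPairs {n : Type*} [Fintype n] [DecidableEq n]
    {v : (Matrix n n F)ˣ} {c : F} {m : ℕ} (hm : m ≠ 0) (hv : (v : Matrix n n F) ^ m = c • 1) :
    ∃ d : F, d ≠ 0 ∧ (d⁻¹ * (v : Matrix n n F).trace, d * (↑v⁻¹ : Matrix n n F).trace) ∈
      conjPairs τ σ := by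
  cases isEmpty_or_nonempty n
  · exact ⟨1, one_ne_zero, by simp [Matrix.trace, ← Prod.zero_eq_mk, zero_mem]⟩
  have hc : c ≠ 0 := by
    rintro rfl
    exact (v ^ m).ne_zero (by rw [Units.val_pow_eq_pow_val, hv, zero_smul])
  obtain ⟨d, hd⟩ := IsAlgClosed.exists_pow_nat_eq c (Nat.pos_of_ne_zero hm)
  have hd0 : d ≠ 0 := by
    rintro rfl
    exact hc (by rw [← hd, zero_pow hm])
  have trace_toLinAlgEquiv' (M : Matrix n n F) :
      LinearMap.trace F _ (Matrix.toLinAlgEquiv' M) = M.trace := Matrix.trace_toLin'_eq M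
  let f : (Module.End F (n → F))ˣ :=
    Units.map (Matrix.toLinAlgEquiv' (R := F)).toMonoidHom ((Units.mk0 d hd0)⁻¹ • v)
  have pow_eq_one : ((Units.mk0 d hd0)⁻¹ • v) ^ m = 1 := by
    ext1
    simp [smul_pow, hv, ← hd, Units.smul_def, smul_smul, hd0]
  have hf : IsOfFinOrder f := isOfFinOrder_iff_pow_eq_one.mpr
    ⟨m, Nat.pos_of_ne_zero hm, by rw [← map_pow, pow_eq_one, map_one]⟩
  refine ⟨d, hd0, ?_⟩
  convert trace_inv_mem_conjPairs (τ := τ) (σ := σ) hf using 2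
  · simp [f, Units.smul_def, trace_toLinAlgEquiv']
  · simp [f, Units.smul_def, ← map_inv, trace_toLinAlgEquiv']

end Trace

end ConjPairs

section FrobeniusForms

section Algebra

variable {F A : Type*} [Field F] [Ring A] [Algebra F A]

/-- A linear form `l` on an algebra is a Frobenius form if the bilinear form
`(x, y) ↦ l (x * y)` has trivial right radical. -/
def IsFrobeniusForm (l : Module.Dual F A) : Prop :=
  ∀ y, (∀ x, l (x * y) = 0) → y = 0

namespace IsFrobeniusForm

variable {t l : Module.Dual F A}

lemma comp_algEquiv {B : Type*} [Ring B] [Algebra F B] (hl : IsFrobeniusForm l) (e : B ≃ₐ[F] A) :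
    IsFrobeniusForm (l ∘ₗ e.toLinearMap) := fun y hy ↦
  e.map_eq_zero_iff.mp (hl _ fun x ↦ by simpa using hy (e.symm x))

lemma eq_of_forall_apply_mul_eq (ht : IsFrobeniusForm t) {x y : A}
    (h : ∀ a, t (a * x) = t (a * y)) : x = y :=
  sub_eq_zero.mp (ht _ fun a ↦ by rw [mul_sub, map_sub, h, sub_self])

lemma mul_eq_of_apply_mul_eq (ht : IsFrobeniusForm t) (htc : ∀ a b, t (a * b) = t (b * a))
    {θ : A → A} {u : A} (hl : ∀ a, l a = t (a * u)) (hθ : ∀ a b, l (a * b) = l (b * θ a)) (a : A) :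
    u * a = θ a * u :=
  ht.eq_of_forall_apply_mul_eq fun b ↦ by
    rw [← mul_assoc, htc, ← mul_assoc, ← hl, hθ, hl, mul_assoc]

variable [FiniteDimensional F A]

lemma exists_eq_apply_mul (ht : IsFrobeniusForm t) (l : Module.Dual F A) :
    ∃ v, ∀ a, l a = t (a * v) := by
  let Φ : A →ₗ[F] Module.Dual F A := ((LinearMap.mul F A).compr₂ t).flip
  have injective : Function.Injective Φ := fun x y hxy ↦
    ht.eq_of_forall_apply_mul_eq fun a ↦ LinearMap.congr_fun hxy a
  obtain ⟨v, hv⟩ := (LinearMap.injective_iff_surjective_of_finrank_eq_finrank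
    Subspace.dual_finrank_eq.symm).mp injective l
  exact ⟨v, fun a ↦ (LinearMap.congr_fun hv a).symm⟩

lemma exists_unit_eq_apply_mul (ht : IsFrobeniusForm t) (hl : IsFrobeniusForm l) :
    ∃ u : Aˣ, ∀ a, l a = t (a * u) := by
  obtain ⟨v, hv⟩ := ht.exists_eq_apply_mul l
  have injective : Function.Injective (LinearMap.mulRight F v) :=
    (injective_iff_map_eq_zero _).mpr fun y hy ↦ hl y fun x ↦ by
      rw [hv, mul_assoc, ← LinearMap.mulRight_apply (R := F) v y, hy, mul_zero, map_zero]
  obtain ⟨w, hw⟩ := LinearMap.injective_iff_surjective.mp injective 1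
  have : IsArtinianRing A := IsArtinianRing.of_finite F A
  exact ⟨⟨v, w, mul_eq_one_comm.mp hw, hw⟩, hv⟩

end IsFrobeniusForm

end Algebra

section PiMatrix

variable {F : Type*} [Field F] {ι : Type*} {n : ι → Type*} [∀ i, Fintype (n i)]

lemma exists_eq_smul_one_of_forall_commute [∀ i, DecidableEq (n i)]
    {v : Π i, Matrix (n i) (n i) F} (hv : ∀ a, Commute v a) (i : ι) : ∃ c : F, v i = c • 1 := by
  classical
  obtain ⟨c, hc⟩ := Matrix.mem_range_scalar_of_commute_single (M := v i) fun p q _ ↦ by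
    simpa [Commute, SemiconjBy] using (congrFun (hv (Pi.single i (Matrix.single p q 1))) i).symm
  exact ⟨c, by rw [← hc, Matrix.scalar_apply, Matrix.smul_one_eq_diagonal]⟩

section Fintype

variable [Fintype ι]

/-- The sum of the traces of the components, on a product of matrix algebras. -/
def piTrace : Module.Dual F (Π i, Matrix (n i) (n i) F) :=
  ∑ i, Matrix.traceLinearMap (n i) F F ∘ₗ LinearMap.proj i

lemma piTrace_apply (a : Π i, Matrix (n i) (n i) F) : piTrace a = ∑ i, (a i).trace := by
  simp [piTrace]

lemma piTrace_mul_comm (a b : Π i, Matrix (n i) (n i) F) : piTrace (a * b) = piTrace (b * a) := by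
  simp only [piTrace_apply, Pi.mul_apply]
  exact Finset.sum_congr rfl fun i _ ↦ Matrix.trace_mul_comm _ _

lemma trace_mulLeft_comp_mulRight (a b : Π i, Matrix (n i) (n i) F) :
    LinearMap.trace F _ (LinearMap.mulLeft F a ∘ₗ LinearMap.mulRight F b) =
      ∑ i, (a i).trace * (b i).trace := by
  classical
  let B := Pi.basis fun i ↦ Matrix.stdBasis F (n i) (n i)
  rw [LinearMap.trace_eq_matrix_trace F B, Matrix.trace, Fintype.sum_sigma]
  refine Finset.sum_congr rfl fun i _ ↦ ?_
  rw [Fintype.sum_prod_type, Matrix.trace, Matrix.trace, Finset.sum_mul_sum]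
  refine Finset.sum_congr rfl fun p _ ↦ Finset.sum_congr rfl fun q _ ↦ ?_
  have basis_apply : B ⟨i, (p, q)⟩ = Pi.single i (Matrix.single p q 1) := by
    simp [B, Matrix.stdBasis_eq_single]
  have repr_apply (x : Π i, Matrix (n i) (n i) F) : B.repr x ⟨i, (p, q)⟩ = x i p q := by
    simp [B, Pi.basis_repr, Matrix.stdBasis]
  rw [Matrix.diag_apply, LinearMap.toMatrix_apply, basis_apply, repr_apply]
  simp [Matrix.mul_apply, Matrix.single_apply, ite_and]

variable [∀ i, DecidableEq (n i)]

lemma isFrobeniusForm_piTrace :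
    IsFrobeniusForm (piTrace : Module.Dual F (Π i, Matrix (n i) (n i) F)) := fun y hy ↦ by
  classical
  refine funext fun i ↦ (Matrix.ext_iff_trace_mul_left).mpr fun x ↦ ?_
  have h := hy (Pi.single i x)
  rw [← Pi.single_mul_left] at h
  rw [piTrace_apply, Finset.sum_eq_single i (fun j _ hj ↦ by simp [Pi.single_eq_of_ne hj])
    (by simp), Pi.single_eq_same] at h
  simpa using h

/-- Once the components of `u` are rescaled to finite order, the summands of `hsum` come from
squared absolute values. -/
lemma piTrace_inv_eq_zero_of_sum_eq_zero [IsAlgClosed F] [CharZero F]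
    {u : (Π i, Matrix (n i) (n i) F)ˣ} {N : ℕ} (hN : N ≠ 0)
    (hu : ∀ a, Commute ((u : Π i, Matrix (n i) (n i) F) ^ N) a)
    (hsum : ∑ i, (u.1 i).trace * (u⁻¹.1 i).trace = 0) (i : ι) : (u⁻¹.1 i).trace = 0 := by
  have : Algebra.IsAlgebraic ℚ (AlgebraicClosure ℚ) := by
    convert AlgebraicClosure.isAlgebraic ℚ using 1
    · rfl
    · exact Subsingleton.elim (α := Algebra ℚ (AlgebraicClosure ℚ)) _ _
  let τ : AlgebraicClosure ℚ →+* F := (IsAlgClosed.lift : AlgebraicClosure ℚ →ₐ[ℚ] F)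
  let σ : AlgebraicClosure ℚ →+* ℂ := (IsAlgClosed.lift : AlgebraicClosure ℚ →ₐ[ℚ] ℂ)
  choose c hc using fun i ↦ exists_eq_smul_one_of_forall_commute hu i
  choose d hd0 hd using fun i ↦ exists_trace_inv_mem_conjPairs (τ := τ) (σ := σ) hN
    (v := Units.map (Pi.evalMonoidHom (fun i ↦ Matrix (n i) (n i) F) i) u) (hc i)
  have h := snd_eq_zero_of_sum_fst_mul_snd_eq_zero hd ?_ i
  · exact (mul_eq_zero.mp h).resolve_left (hd0 i)
  · rw [← hsum]
    refine Finset.sum_congr rfl fun i _ ↦ ?_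
    rw [mul_mul_mul_comm, inv_mul_cancel₀ (hd0 i), one_mul]
    rfl

end Fintype

theorem IsFrobeniusForm.pi_apply_one_ne_zero [IsAlgClosed F] [CharZero F] [Finite ι]
    [∀ i, DecidableEq (n i)] [Nontrivial (Π i, Matrix (n i) (n i) F)]
    {θ : Module.End F (Π i, Matrix (n i) (n i) F)} {l : Module.Dual F (Π i, Matrix (n i) (n i) F)}
    (hl : IsFrobeniusForm l) (hlθ : ∀ a, l a = LinearMap.trace F _ (LinearMap.mulLeft F a ∘ₗ θ))
    (hmul : ∀ a b, l (a * b) = l (b * θ a)) {N : ℕ} (hN : N ≠ 0) (hθN : θ ^ N = 1) : l 1 ≠ 0 := by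
  cases nonempty_fintype ι
  obtain ⟨u, hu⟩ := isFrobeniusForm_piTrace.exists_unit_eq_apply_mul hl
  have mul_eq := isFrobeniusForm_piTrace.mul_eq_of_apply_mul_eq piTrace_mul_comm hu hmul
  have pow_mul_eq (j : ℕ) : ∀ a, u.1 ^ j * a = (θ ^ j) a * u.1 ^ j := by
    induction j with
    | zero => simp
    | succ j ih =>
      intro a
      rw [pow_succ, mul_assoc, mul_eq, ← mul_assoc, ih, pow_succ θ, Module.End.mul_apply, mul_assoc]
  have θ_eq : θ = LinearMap.mulLeft F u.1 ∘ₗ LinearMap.mulRight F u⁻¹.1 := by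
    refine LinearMap.ext fun a ↦ ?_
    rw [LinearMap.comp_apply, LinearMap.mulLeft_apply, LinearMap.mulRight_apply, ← mul_assoc,
      mul_eq, Units.mul_inv_cancel_right]
  have l_apply (a) : l a = ∑ i, ((a * u.1) i).trace * (u⁻¹.1 i).trace := by
    rw [hlθ, θ_eq, ← LinearMap.comp_assoc, ← LinearMap.mulLeft_mul, trace_mulLeft_comp_mulRight]
  intro l_one
  rw [l_apply, one_mul] at l_one
  have trace_inv := piTrace_inv_eq_zero_of_sum_eq_zero hN
    (fun a ↦ by rw [Commute, SemiconjBy, pow_mul_eq, hθN, Module.End.one_apply]) l_one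
  exact one_ne_zero (hl 1 fun a ↦ by simp [l_apply, trace_inv])

end PiMatrix

/-- By `hmul`, the operator `θ` is the Nakayama automorphism of `l`. -/
theorem IsFrobeniusForm.apply_one_ne_zero {F A : Type*} [Field F] [IsAlgClosed F] [CharZero F]
    [Ring A] [Nontrivial A] [Algebra F A] [FiniteDimensional F A] [IsSemisimpleRing A]
    {θ : Module.End F A} {l : Module.Dual F A} (hl : IsFrobeniusForm l)
    (hlθ : ∀ a, l a = LinearMap.trace F A (LinearMap.mulLeft F a ∘ₗ θ))
    (hmul : ∀ a b, l (a * b) = l (b * θ a)) {N : ℕ} (hN : N ≠ 0) (hθN : θ ^ N = 1) : l 1 ≠ 0 := by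
  obtain ⟨m, d, -, ⟨e⟩⟩ := IsSemisimpleRing.exists_algEquiv_pi_matrix_of_isAlgClosed F A
  have := e.injective.nontrivial
  let θ' : Module.End F (Π i, Matrix (Fin (d i)) (Fin (d i)) F) := e.toLinearEquiv.conjAlgEquiv F θ
  have hlθ' (a) : (l ∘ₗ e.symm.toLinearMap) a =
      LinearMap.trace F _ (LinearMap.mulLeft F a ∘ₗ θ') := by
    have mulLeft_comp : LinearMap.mulLeft F a ∘ₗ θ' =
        e.toLinearEquiv.conj (LinearMap.mulLeft F (e.symm a) ∘ₗ θ) :=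
      LinearMap.ext fun x ↦ by simp [θ', LinearEquiv.conj_apply]
    rw [mulLeft_comp, LinearMap.trace_conj', ← hlθ, LinearMap.comp_apply,
      AlgEquiv.toLinearMap_apply]
  have hmul' (a b) : (l ∘ₗ e.symm.toLinearMap) (a * b) = (l ∘ₗ e.symm.toLinearMap) (b * θ' a) := by
    simp [θ', hmul (e.symm a)]
  have hθN' : θ' ^ N = 1 := by rw [← map_pow, hθN, map_one]
  simpa using (hl.comp_algEquiv e.symm).pi_apply_one_ne_zero hlθ' hmul' hN hθN'

end FrobeniusForms

section HitActions

open Coalgebra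

variable {R C : Type*} [CommSemiring R] [AddCommMonoid C] [Module R C] [Coalgebra R C]

/-- The left hit action `φ ⇀ x = φ(x₂) x₁` of the dual of a coalgebra. -/
def leftHit : Module.Dual R C →ₗ[R] C →ₗ[R] C where
  toFun φ := TensorProduct.rid R C ∘ₗ φ.lTensor C ∘ₗ comul
  map_add' φ ψ := by ext x; simp [LinearMap.lTensor_add]
  map_smul' c φ := by ext x; simp [LinearMap.lTensor_smul]

/-- The right hit action `x ↼ φ = φ(x₁) x₂` of the dual of a coalgebra, with the functional as
first argument. -/
def rightHit : Module.Dual R C →ₗ[R] C →ₗ[R] C where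
  toFun φ := TensorProduct.lid R C ∘ₗ φ.rTensor C ∘ₗ comul
  map_add' φ ψ := by ext x; simp [LinearMap.rTensor_add]
  map_smul' c φ := by ext x; simp [LinearMap.rTensor_smul]

lemma leftHit_eq_sum {ι : Type*} {x : C} (r : Repr R x ι) (φ : Module.Dual R C) :
    leftHit φ x = ∑ i ∈ r.index, φ (r.right i) • r.left i := by
  simp [leftHit, ← r.eq]

lemma rightHit_eq_sum {ι : Type*} {x : C} (r : Repr R x ι) (φ : Module.Dual R C) :
    rightHit φ x = ∑ i ∈ r.index, φ (r.left i) • r.right i := by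
  simp [rightHit, ← r.eq]

lemma leftHit_counit (x : C) : leftHit (counit (R := R)) x = x := by
  simp [leftHit]

lemma rightHit_counit (x : C) : rightHit (counit (R := R)) x = x := by
  simp [rightHit]

lemma apply_leftHit (φ ψ : Module.Dual R C) (x : C) : φ (leftHit ψ x) = ψ (rightHit φ x) := by
  simp [leftHit_eq_sum (ℛ R x), rightHit_eq_sum (ℛ R x), mul_comm]

lemma leftHit_leftHit (φ ψ : Module.Dual R C) (x : C) :
    leftHit φ (leftHit ψ x) = leftHit (ψ ∘ₗ rightHit φ) x := by
  have h := congrArg (TensorProduct.rid R C ∘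
      (TensorProduct.lid R R ∘ₗ TensorProduct.map φ ψ).lTensor C)
    (sum_tmul_tmul_eq (ℛ R x) (fun i ↦ ℛ R ((ℛ R x).left i)) fun i ↦ ℛ R ((ℛ R x).right i))
  rw [leftHit_eq_sum (ℛ R x) ψ, leftHit_eq_sum (ℛ R x), map_sum]
  simpa [leftHit_eq_sum (ℛ R ((ℛ R x).left _)), rightHit_eq_sum (ℛ R ((ℛ R x).right _)),
    Finset.smul_sum, Finset.sum_smul, smul_smul, mul_comm] using h

lemma rightHit_rightHit (φ ψ : Module.Dual R C) (x : C) :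
    rightHit ψ (rightHit φ x) = rightHit (ψ ∘ₗ rightHit φ) x := by
  have h := congrArg (TensorProduct.lid R C ∘ φ.rTensor C ∘
      (TensorProduct.lid R C ∘ₗ ψ.rTensor C).lTensor C)
    (sum_tmul_tmul_eq (ℛ R x) (fun i ↦ ℛ R ((ℛ R x).left i)) fun i ↦ ℛ R ((ℛ R x).right i))
  rw [rightHit_eq_sum (ℛ R x) φ, rightHit_eq_sum (ℛ R x), map_sum]
  simpa [rightHit_eq_sum (ℛ R ((ℛ R x).left _)), rightHit_eq_sum (ℛ R ((ℛ R x).right _)),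
    Finset.smul_sum, Finset.sum_smul, smul_smul, mul_comm] using h.symm

end HitActions

lemma eq_of_forall_rTensor_eq {R M N : Type*} [CommRing R] [AddCommGroup M] [Module R M]
    [Module.Free R M] [AddCommGroup N] [Module R N] {s t : M ⊗[R] N}
    (h : ∀ φ : Module.Dual R M, φ.rTensor N s = φ.rTensor N t) : s = t := by
  apply (TensorProduct.equivFinsuppOfBasisLeft (Module.Free.chooseBasis R M)).injective
  ext i
  simp only [TensorProduct.equivFinsuppOfBasisLeft_apply, h]

section Antipode

open Coalgebra HopfAlgebra LinearMap WithConv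

section Semiring

variable {R A : Type*} [CommSemiring R] [Semiring A] [HopfAlgebra R A]

lemma comul_antipode (x : A) :
    comul (R := R) (antipode R x) = TensorProduct.map (antipode R) (antipode R)
      (TensorProduct.comm R A A (comul (R := R) x)) := by
  let i₁ : A →ₐ[R] A ⊗[R] A := Algebra.TensorProduct.includeLeft
  let i₂ : A →ₐ[R] A ⊗[R] A := Algebra.TensorProduct.includeRight
  let G : A →ₗ[R] A ⊗[R] A := TensorProduct.map (antipode R) (antipode R) ∘ₗ
    (TensorProduct.comm R A A).toLinearMap ∘ₗ comul
  have comul_eq : toConv (comul (R := R) (A := A)) =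
      toConv i₁.toLinearMap * toConv i₂.toLinearMap := by
    ext x
    rw [(ℛ R x).convMul_apply]
    simp [i₁, i₂, (ℛ R x).eq]
  have G_eq : toConv G = toConv (i₂.toLinearMap ∘ₗ antipode R) *
      toConv (i₁.toLinearMap ∘ₗ antipode R) := by
    ext x
    rw [(ℛ R x).convMul_apply]
    simp [i₁, i₂, G, ← (ℛ R x).eq]
  have antipode_mul (i : A →ₐ[R] A ⊗[R] A) :
      toConv (i.toLinearMap ∘ₗ antipode R) * toConv i.toLinearMap = 1 := by
    ext x
    rw [(ℛ R x).convMul_apply]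
    simp only [LinearMap.comp_apply, AlgHom.toLinearMap_apply, ← map_mul, ← map_sum,
      sum_antipode_mul_eq_algebraMap_counit, AlgHom.commutes, convOne_apply]
  have G_mul : toConv G * toConv (comul (R := R) (A := A)) = 1 := by
    rw [comul_eq, G_eq, mul_assoc, ← mul_assoc (toConv (i₁.toLinearMap ∘ₗ _)), antipode_mul,
      one_mul, antipode_mul]
  exact (congrArg (fun f : WithConv (A →ₗ[R] A ⊗[R] A) ↦ f x)
    (left_inv_eq_right_inv G_mul LinearMap.comul_right_inv)).symm

lemma rightHit_antipode (φ : Module.Dual R A) (x : A) :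
    rightHit φ (antipode R x) = antipode R (leftHit (φ ∘ₗ antipode R) x) := by
  simp [rightHit, leftHit_eq_sum (ℛ R x), comul_antipode, ← (ℛ R x).eq]

lemma leftHit_antipode (φ : Module.Dual R A) (x : A) :
    leftHit φ (antipode R x) = antipode R (rightHit (φ ∘ₗ antipode R) x) := by
  simp [leftHit, rightHit_eq_sum (ℛ R x), comul_antipode, ← (ℛ R x).eq]

lemma rightHit_antipode_antipode (φ : Module.Dual R A) (x : A) :
    rightHit φ (antipode R (antipode R x)) =
      antipode R (antipode R (rightHit (φ ∘ₗ antipode R ∘ₗ antipode R) x)) := by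
  rw [rightHit_antipode, leftHit_antipode, LinearMap.comp_assoc]

lemma leftHit_mul_antipode_eq_sum (φ : Module.Dual R A) (x y : A) :
    leftHit φ (x * antipode R y) = ∑ i ∈ (ℛ R y).index,
      leftHit (φ ∘ₗ mulRight R (antipode R ((ℛ R y).left i))) x *
        antipode R ((ℛ R y).right i) := by
  simp only [leftHit_eq_sum (ℛ R x), Finset.sum_mul]
  rw [Finset.sum_comm]
  simp [leftHit, Bialgebra.comul_mul, comul_antipode, ← (ℛ R x).eq, ← (ℛ R y).eq,
    Finset.sum_mul_sum]

end Semiring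

end Antipode

section HitMul

open Coalgebra LinearMap

variable {R A : Type*} [CommSemiring R] [Semiring A] [Bialgebra R A]

lemma rightHit_mul_eq_sum_left (φ : Module.Dual R A) (x y : A) :
    rightHit φ (x * y) = ∑ i ∈ (ℛ R x).index,
      (ℛ R x).right i * rightHit (φ ∘ₗ mulLeft R ((ℛ R x).left i)) y := by
  simp only [rightHit_eq_sum (ℛ R y), Finset.mul_sum]
  simp [rightHit, Bialgebra.comul_mul, ← (ℛ R x).eq, ← (ℛ R y).eq, Finset.sum_mul_sum]

lemma rightHit_mul_eq_sum_right (φ : Module.Dual R A) (x y : A) :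
    rightHit φ (x * y) = ∑ i ∈ (ℛ R y).index,
      rightHit (φ ∘ₗ mulRight R ((ℛ R y).left i)) x * (ℛ R y).right i := by
  simp only [rightHit_eq_sum (ℛ R x), Finset.sum_mul]
  rw [Finset.sum_comm]
  simp [rightHit, Bialgebra.comul_mul, ← (ℛ R x).eq, ← (ℛ R y).eq, Finset.sum_mul_sum]

end HitMul

section Integrals

open Coalgebra HopfAlgebra LinearMap WithConv

section DualIntegral

variable {R A : Type*} [CommSemiring R] [Semiring A] [Bialgebra R A]

/-- A left integral of the dual of a Hopf algebra: `x₁ λ(x₂) = λ(x) 1`. -/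
def IsLeftIntegral (lam : Module.Dual R A) : Prop :=
  ∀ x, leftHit lam x = lam x • 1

/-- A right integral of the dual of a Hopf algebra: `λ(x₁) x₂ = λ(x) 1`. -/
def IsRightIntegral (lam : Module.Dual R A) : Prop :=
  ∀ x, rightHit lam x = lam x • 1

end DualIntegral

section Shift

variable {R A : Type*} [CommRing R] [Ring A] [HopfAlgebra R A] {lam : Module.Dual R A}

lemma smulRight_one_convMul_apply (φ : Module.Dual R A) (f : A →ₗ[R] A) (x : A) :
    (toConv (φ.smulRight (1 : A)) * toConv f) x = f (rightHit φ x) := by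
  rw [(ℛ R x).convMul_apply, rightHit_eq_sum (ℛ R x)]
  simp

/-- Convolving `y ↦ (λ ∘ R_{S y}) ⇀ x` with the antipode gives `λ(x S(y)) 1`. -/
lemma IsLeftIntegral.leftHit_comp_mulRight_antipode (hlam : IsLeftIntegral lam) (x y : A) :
    leftHit (lam ∘ₗ mulRight R (antipode R y)) x =
      rightHit (lam ∘ₗ mulLeft R x ∘ₗ antipode R) y := by
  let P : A →ₗ[R] A :=
    leftHit.flip x ∘ₗ LinearMap.compr₂ (LinearMap.mul R A).flip lam ∘ₗ antipode R
  let φ : Module.Dual R A := lam ∘ₗ mulLeft R x ∘ₗ antipode R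
  have P_mul : toConv P * toConv (antipode R) = toConv (φ.smulRight (1 : A)) := by
    ext y
    calc (toConv P * toConv (antipode R) : WithConv (A →ₗ[R] A)) y
      _ = leftHit lam (x * antipode R y) := by
          rw [(ℛ R y).convMul_apply, leftHit_mul_antipode_eq_sum]
          rfl
      _ = _ := hlam _
  have P_eq : toConv P = toConv (φ.smulRight (1 : A)) * toConv LinearMap.id := by
    rw [← P_mul, mul_assoc, LinearMap.antipode_mul_id, mul_one]
  calc P y = (toConv (φ.smulRight 1) * toConv LinearMap.id : WithConv (A →ₗ[R] A)) y :=
        congrArg (fun f : WithConv (A →ₗ[R] A) ↦ f y) P_eq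
    _ = rightHit φ y := smulRight_one_convMul_apply φ LinearMap.id y

lemma IsRightIntegral.rightHit_comp_mulRight (hlam : IsRightIntegral lam) (x y : A) :
    rightHit (lam ∘ₗ mulRight R y) x = antipode R (rightHit (lam ∘ₗ mulLeft R x) y) := by
  let P : A →ₗ[R] A := rightHit.flip x ∘ₗ LinearMap.compr₂ (LinearMap.mul R A).flip lam
  let φ : Module.Dual R A := lam ∘ₗ mulLeft R x
  have P_mul : toConv P * toConv LinearMap.id = toConv (φ.smulRight (1 : A)) := by
    ext y
    calc (toConv P * toConv LinearMap.id : WithConv (A →ₗ[R] A)) y = rightHit lam (x * y) := by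
          rw [(ℛ R y).convMul_apply, rightHit_mul_eq_sum_right]
          rfl
      _ = _ := hlam _
  have P_eq : toConv P = toConv (φ.smulRight (1 : A)) * toConv (antipode R) := by
    rw [← P_mul, mul_assoc, LinearMap.id_mul_antipode, mul_one]
  calc P y = (toConv (φ.smulRight 1) * toConv (antipode R) : WithConv (A →ₗ[R] A)) y :=
        congrArg (fun f : WithConv (A →ₗ[R] A) ↦ f y) P_eq
    _ = antipode R (rightHit φ y) := smulRight_one_convMul_apply φ (antipode R) y

end Shift

lemma dual_apply_mul_eq_sum_coord {R A ι : Type*} [CommRing R] [Ring A] [Algebra R A] [Fintype ι]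
    (b : Module.Basis ι R A) (f : Module.Dual R A) (x y : A) :
    f (x * y) = ∑ i, b.coord i x * (f ∘ₗ mulLeft R (b i)) y := by
  conv_lhs => rw [← b.sum_repr x, Finset.sum_mul, map_sum]
  simp

section SumRightHit

variable {R A ι : Type*} [CommRing R] [Ring A] [HopfAlgebra R A] [Fintype ι]
  {f : Module.Dual R A} {φ ψ : ι → Module.Dual R A}
  (hf : ∀ x y, f (x * y) = ∑ i, φ i x * ψ i y)
include hf

lemma sum_rightHit_rightHit_antipode (x : A) :
    ∑ i, rightHit (ψ i ∘ₗ antipode R) (rightHit (φ i) x) = f 1 • x := by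
  have h : ∑ i, (ψ i ∘ₗ antipode R) ∘ₗ rightHit (φ i) = f 1 • counit (R := R) := by
    ext x
    simp only [LinearMap.sum_apply, LinearMap.comp_apply, rightHit_eq_sum (ℛ R x), map_sum,
      map_smul, smul_eq_mul, LinearMap.smul_apply]
    rw [Finset.sum_comm]
    simp only [← hf, ← map_sum]
    simp [sum_mul_antipode_eq_smul, mul_comm]
  simp only [rightHit_rightHit, ← LinearMap.sum_apply, ← map_sum, h, map_smul,
    LinearMap.smul_apply, rightHit_counit]

lemma sum_rightHit_rightHit_antipode_mulLeft (a x : A) :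
    ∑ i, rightHit (φ i ∘ₗ mulLeft R a ∘ₗ antipode R ∘ₗ antipode R)
      (rightHit (ψ i ∘ₗ antipode R) x) = f a • x := by
  have h : ∑ i, (φ i ∘ₗ mulLeft R a ∘ₗ antipode R ∘ₗ antipode R) ∘ₗ
      rightHit (ψ i ∘ₗ antipode R) = f a • counit (R := R) := by
    ext x
    simp only [LinearMap.sum_apply, LinearMap.comp_apply, rightHit_eq_sum (ℛ R x), map_sum,
      map_smul, mulLeft_apply, smul_eq_mul, mul_comm (ψ _ _), LinearMap.smul_apply]
    rw [Finset.sum_comm]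
    simp only [← hf, ← map_sum, mul_assoc, ← antipode_mul_antidistrib, ← Finset.mul_sum]
    simp [sum_mul_antipode_eq_smul, mul_comm, antipode_one]
  simp only [rightHit_rightHit, ← LinearMap.sum_apply, ← map_sum, h, map_smul,
    LinearMap.smul_apply, rightHit_counit]

lemma sum_rightHit_mul_antipode_antipode (h x : A) :
    ∑ i, rightHit (φ i) (h * antipode R (antipode R (rightHit (ψ i ∘ₗ antipode R) x))) =
      rightHit f h * antipode R (antipode R x) := by
  simp only [rightHit_mul_eq_sum_left, rightHit_antipode_antipode, LinearMap.comp_assoc]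
  rw [Finset.sum_comm]
  simp only [← Finset.mul_sum, ← map_sum, sum_rightHit_rightHit_antipode_mulLeft hf]
  simp [rightHit_eq_sum (ℛ R h), Finset.sum_mul]

end SumRightHit

section AntipodeTrace

variable {R A : Type*} [CommRing R] [Ring A] [HopfAlgebra R A]

/-- The functional `h ↦ Tr(x ↦ h S²(x))`, a left integral of the dual when `A` is free of finite
rank. -/
def antipodeTrace : Module.Dual R A :=
  LinearMap.trace R A ∘ₗ LinearMap.lcomp R A (antipode R ∘ₗ antipode R) ∘ₗ LinearMap.mul R A

lemma antipodeTrace_apply (h : A) :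
    antipodeTrace (R := R) h = LinearMap.trace R A (mulLeft R h ∘ₗ antipode R ∘ₗ antipode R) :=
  rfl

variable [Module.Free R A] [Module.Finite R A]

lemma antipodeTrace_mul (a b : A) :
    antipodeTrace (R := R) (a * b) = antipodeTrace (R := R) (b * antipode R (antipode R a)) := by
  rw [antipodeTrace_apply, mulLeft_mul, LinearMap.comp_assoc, LinearMap.trace_comp_comm',
    antipodeTrace_apply]
  congr 1
  ext x
  simp [antipode_mul_antidistrib]

theorem isLeftIntegral_antipodeTrace : IsLeftIntegral (antipodeTrace (R := R) (A := A)) := by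
  intro h
  rw [← sub_eq_zero, ← Module.forall_dual_apply_eq_zero_iff R]
  intro f
  let b := Module.Free.chooseBasis R A
  let φ := b.coord
  let ψ := fun i ↦ f ∘ₗ mulLeft R (b i)
  have hf : ∀ x y, f (x * y) = ∑ i, φ i x * ψ i y := dual_apply_mul_eq_sum_coord b f
  let M : Module.End R A := mulLeft R h ∘ₗ antipode R ∘ₗ antipode R
  have left_sum : ∑ i, rightHit (φ i) ∘ₗ M ∘ₗ rightHit (ψ i ∘ₗ antipode R) =
      mulLeft R (rightHit f h) ∘ₗ antipode R ∘ₗ antipode R := by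
    ext x
    simpa [M, LinearMap.sum_apply] using sum_rightHit_mul_antipode_antipode hf h x
  have right_sum : ∑ i, (M ∘ₗ rightHit (ψ i ∘ₗ antipode R)) ∘ₗ rightHit (φ i) = f 1 • M := by
    ext x
    simpa [LinearMap.sum_apply] using congrArg M (sum_rightHit_rightHit_antipode hf x)
  have key : antipodeTrace (R := R) (rightHit f h) = f 1 * antipodeTrace (R := R) h := by
    calc antipodeTrace (R := R) (rightHit f h)
        = ∑ i, LinearMap.trace R A (rightHit (φ i) ∘ₗ M ∘ₗ rightHit (ψ i ∘ₗ antipode R)) := by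
          rw [antipodeTrace_apply, ← left_sum, map_sum]
      _ = ∑ i, LinearMap.trace R A ((M ∘ₗ rightHit (ψ i ∘ₗ antipode R)) ∘ₗ rightHit (φ i)) :=
          Finset.sum_congr rfl fun i _ ↦ LinearMap.trace_comp_comm' _ _
      _ = f 1 * antipodeTrace (R := R) h := by
          rw [← map_sum, right_sum, map_smul, smul_eq_mul, antipodeTrace_apply]
  rw [map_sub, apply_leftHit, key]
  simp [mul_comm]

end AntipodeTrace

section NormalizedIntegral

variable {R A : Type*} [CommRing R] [Ring A] [HopfAlgebra R A]

variable (R) in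
/-- A right integral `L` of a Hopf algebra, normalized by `ε(L) = 1`. -/
structure IsNormalizedRightIntegral (L : A) : Prop where
  mul_eq_smul : ∀ x, L * x = counit (R := R) x • L
  counit_eq_one : counit (R := R) L = 1

namespace IsNormalizedRightIntegral

section Shift

variable {L : A} (hL : IsNormalizedRightIntegral R L) {lam : Module.Dual R A}
include hL

lemma comp_mulLeft_eq_smul_counit (φ : Module.Dual R A) :
    φ ∘ₗ mulLeft R L = φ L • counit (R := R) := by
  ext x
  simp [hL.mul_eq_smul, mul_comm]

lemma leftHit_comp_mulRight_antipode (hlam : IsLeftIntegral lam) (y : A) :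
    leftHit (lam ∘ₗ mulRight R (antipode R y)) L = lam L • y := by
  rw [hlam.leftHit_comp_mulRight_antipode, ← LinearMap.comp_assoc,
    hL.comp_mulLeft_eq_smul_counit]
  simp [LinearMap.smul_comp, counit_comp_antipode, rightHit_counit]

lemma apply_rightHit_mul_antipode (hlam : IsLeftIntegral lam) (φ : Module.Dual R A) (y : A) :
    lam (rightHit φ L * antipode R y) = lam L * φ y := by
  have h := congrArg φ (hL.leftHit_comp_mulRight_antipode hlam y)
  rwa [apply_leftHit, map_smul] at h

end Shift

section Field

variable {F B : Type*} [Field F] [Ring B] [HopfAlgebra F B] [FiniteDimensional F B]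
  {L : B} (hL : IsNormalizedRightIntegral F L)
include hL

lemma antipodeTrace_eq_one : antipodeTrace (R := F) L = 1 := by
  have : mulLeft F L ∘ₗ antipode F ∘ₗ antipode F = (counit (R := F)).smulRight L := by
    ext x
    simp [hL.mul_eq_smul]
  rw [antipodeTrace_apply, this]
  simp [hL.counit_eq_one]

lemma antipode_injective : Function.Injective (antipode F (A := B)) := by
  rw [injective_iff_map_eq_zero]
  intro y hy
  have h := hL.leftHit_comp_mulRight_antipode isLeftIntegral_antipodeTrace y
  simpa [hy, hL.antipodeTrace_eq_one, mulRight_zero_eq_zero] using h.symm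

lemma isFrobeniusForm_antipodeTrace :
    IsFrobeniusForm (antipodeTrace : Module.Dual F B) := fun y hy ↦ by
  obtain ⟨z, rfl⟩ := LinearMap.injective_iff_surjective.mp hL.antipode_injective y
  have hz : antipodeTrace (R := F) ∘ₗ mulRight F (antipode F z) = 0 := LinearMap.ext hy
  have h := hL.leftHit_comp_mulRight_antipode isLeftIntegral_antipodeTrace z
  rw [hL.antipodeTrace_eq_one, one_smul, hz] at h
  simp [← h]

lemma rightHit_surjective : Function.Surjective fun φ : Module.Dual F B ↦ rightHit φ L := by
  refine (LinearMap.injective_iff_surjective_of_finrank_eq_finrank Subspace.dual_finrank_eq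
    (f := (rightHit (R := F)).flip L)).mp ((injective_iff_map_eq_zero _).mpr fun φ hφ ↦ ?_)
  ext y
  have h := hL.apply_rightHit_mul_antipode isLeftIntegral_antipodeTrace φ y
  rw [LinearMap.flip_apply] at hφ
  simpa [hφ, hL.antipodeTrace_eq_one] using h.symm

lemma eq_smul_antipodeTrace {lam : Module.Dual F B} (hlam : IsLeftIntegral lam) :
    lam = lam L • antipodeTrace (R := F) := by
  ext y
  obtain ⟨φ, rfl⟩ := hL.rightHit_surjective y
  simp [← apply_leftHit, hlam L, isLeftIntegral_antipodeTrace L, hL.antipodeTrace_eq_one]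

lemma rightHit_antipodeTrace (x : B) :
    rightHit (antipodeTrace (R := F)) x =
      antipodeTrace (R := F) x • rightHit (antipodeTrace (R := F)) L := by
  rw [← sub_eq_zero, ← Module.forall_dual_apply_eq_zero_iff F]
  intro f
  have h_left : IsLeftIntegral (f ∘ₗ rightHit (antipodeTrace (R := F))) := fun y ↦ by
    rw [← leftHit_leftHit, isLeftIntegral_antipodeTrace, apply_leftHit, LinearMap.comp_apply]
  have h := LinearMap.congr_fun (hL.eq_smul_antipodeTrace h_left) x
  rw [map_sub, map_smul, sub_eq_zero, smul_eq_mul, mul_comm]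
  exact h

lemma isGroupLikeElem_rightHit_antipodeTrace :
    IsGroupLikeElem F (rightHit (antipodeTrace (R := F)) L) where
  counit_eq_one := by
    rw [← apply_leftHit, leftHit_counit, hL.antipodeTrace_eq_one]
  comul_eq_tmul_self := by
    refine eq_of_forall_rTensor_eq fun φ ↦ (TensorProduct.lid F B).injective ?_
    change rightHit φ (rightHit _ L) = _
    have h : φ ∘ₗ rightHit (antipodeTrace (R := F)) =
        φ (rightHit (antipodeTrace (R := F)) L) • antipodeTrace (R := F) := by
      ext x
      simp [hL.rightHit_antipodeTrace x, mul_comm]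
    simp [rightHit_rightHit, h]

lemma antipodeTrace_antipode (x : B) :
    antipodeTrace (R := F) (antipode F x) =
      antipodeTrace (R := F) (x * rightHit (antipodeTrace (R := F)) L) := by
  have hγ := hL.isGroupLikeElem_rightHit_antipodeTrace
  have h := hL.apply_rightHit_mul_antipode isLeftIntegral_antipodeTrace (antipodeTrace (R := F))
    (x * rightHit (antipodeTrace (R := F)) L)
  rwa [antipode_mul_antidistrib, ← mul_assoc, hγ.mul_antipode_cancel, one_mul,
    hL.antipodeTrace_eq_one, one_mul] at h

/-- Radford's formula for `S⁴`; the modular function of `B` is trivial since `ε(L) = 1`. -/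
theorem mul_rightHit_antipodeTrace (b : B) :
    b * rightHit (antipodeTrace (R := F)) L = rightHit (antipodeTrace (R := F)) L *
      antipode F (antipode F (antipode F (antipode F b))) := by
  set γ := rightHit (antipodeTrace (R := F)) L
  refine hL.isFrobeniusForm_antipodeTrace.eq_of_forall_apply_mul_eq fun a ↦ ?_
  calc antipodeTrace (R := F) (a * (b * γ))
      = antipodeTrace (R := F) (antipode F (a * b)) := by
        rw [hL.antipodeTrace_antipode, mul_assoc]
    _ = antipodeTrace (R := F) (antipode F (antipode F (antipode F b) * a)) := by
        rw [antipode_mul_antidistrib, antipodeTrace_mul, antipode_mul_antidistrib]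
    _ = antipodeTrace (R := F) (a * (γ * antipode F (antipode F (antipode F (antipode F b))))) := by
        rw [hL.antipodeTrace_antipode, mul_assoc, antipodeTrace_mul, mul_assoc]

end Field

end IsNormalizedRightIntegral

end NormalizedIntegral

end Integrals

section LarsonRadford

open Coalgebra HopfAlgebra LinearMap

lemma exists_isNormalizedRightIntegral (R A : Type*) [CommRing R] [Ring A] [HopfAlgebra R A]
    [IsSemisimpleRing A] : ∃ L : A, IsNormalizedRightIntegral R L := by
  let ε : Aᵐᵒᵖ →+* R := (Bialgebra.counitAlgHom R A).toRingHom.fromOpposite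
    fun x y ↦ Commute.all _ _
  obtain ⟨J, hJ⟩ := exists_isCompl (RingHom.ker ε)
  obtain ⟨a, ha, l, hl, hal⟩ := Submodule.mem_sup.mp
    (hJ.sup_eq_top ▸ Submodule.mem_top : (1 : Aᵐᵒᵖ) ∈ RingHom.ker ε ⊔ J)
  refine ⟨l.unop, fun x ↦ ?_, ?_⟩
  · have hx : MulOpposite.op x * l - MulOpposite.op (algebraMap R A (counit x)) * l = 0 := by
      rw [← Submodule.mem_bot Aᵐᵒᵖ, ← hJ.inf_eq_bot]
      refine ⟨?_, J.sub_mem (J.smul_mem _ hl) (J.smul_mem _ hl)⟩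
      rw [SetLike.mem_coe, RingHom.mem_ker, ← sub_mul, map_mul, map_sub]
      simp [ε]
    simpa [Algebra.smul_def, Algebra.commutes] using congrArg MulOpposite.unop (sub_eq_zero.mp hx)
  · change ε l = 1
    rw [← map_one ε, ← hal, map_add, RingHom.mem_ker.mp ha, zero_add]

section FiniteDimensional

variable {F B : Type*} [Field F] [Ring B] [HopfAlgebra F B] [FiniteDimensional F B]

lemma isOfFinOrder_of_isGroupLikeElem {γ : B} (hγ : IsGroupLikeElem F γ) : IsOfFinOrder γ :=
  have : Finite (GroupLike F B) := (linearIndep_groupLikeVal (R := F) (A := B)).finite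
  (GroupLike.valMonoidHom (R := F) (A := B)).isOfFinOrder
    (isOfFinOrder_of_finite (⟨γ, hγ⟩ : GroupLike F B))

variable [IsSemisimpleRing B]

variable (F B) in
lemma exists_antipode_sq_pow_eq_one :
    ∃ N ≠ 0, (antipode F ∘ₗ antipode F : Module.End F B) ^ N = 1 := by
  obtain ⟨L, hL⟩ := exists_isNormalizedRightIntegral F B
  set γ := rightHit (antipodeTrace (R := F)) L
  obtain ⟨n, hn, (hγn : γ ^ n = 1)⟩ := isOfFinOrder_iff_pow_eq_one.mp
    (isOfFinOrder_of_isGroupLikeElem hL.isGroupLikeElem_rightHit_antipodeTrace)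
  set T : Module.End F B := (antipode F ∘ₗ antipode F) ^ 2 with T_def
  have mul_γ (b : B) : b * γ = γ * T b := hL.mul_rightHit_antipodeTrace b
  have mul_γ_pow (j : ℕ) (b : B) : b * γ ^ j = γ ^ j * (T ^ j) b := by
    induction j generalizing b with
    | zero => simp
    | succ j ih =>
      rw [pow_succ', ← mul_assoc, mul_γ, mul_assoc, ih, pow_succ T, Module.End.mul_apply, mul_assoc]
  refine ⟨2 * n, by positivity, ?_⟩
  ext b
  simpa [pow_mul, ← T_def, hγn] using (mul_γ_pow n b).symm

variable (F B) in
/-- The value at `1` is the trace of `S²`, whose nonvanishing is due to Larson and Radford. -/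
theorem antipodeTrace_one_ne_zero [IsAlgClosed F] [CharZero F] :
    antipodeTrace (R := F) (1 : B) ≠ 0 := by
  have := Bialgebra.nontrivial (R := F) (A := B)
  obtain ⟨L, hL⟩ := exists_isNormalizedRightIntegral F B
  obtain ⟨N, hN, hSN⟩ := exists_antipode_sq_pow_eq_one F B
  exact hL.isFrobeniusForm_antipodeTrace.apply_one_ne_zero (θ := antipode F ∘ₗ antipode F)
    antipodeTrace_apply antipodeTrace_mul hN hSN

/-- The group-like obstruction to `τ` being a right integral is seen to be `1` by evaluating at
`1`, where `τ` does not vanish. -/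
theorem isRightIntegral_antipodeTrace [IsAlgClosed F] [CharZero F] :
    IsRightIntegral (antipodeTrace (R := F) (A := B)) := fun x ↦ by
  obtain ⟨L, hL⟩ := exists_isNormalizedRightIntegral F B
  have h : antipodeTrace (R := F) (1 : B) • (1 : B) =
      antipodeTrace (R := F) (1 : B) • rightHit (antipodeTrace (R := F)) L := by
    rw [← hL.rightHit_antipodeTrace]
    simp [rightHit, Algebra.TensorProduct.one_def]
  rw [hL.rightHit_antipodeTrace, ← smul_right_injective B (antipodeTrace_one_ne_zero F B) h]

end FiniteDimensional

end LarsonRadford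

section Subcoalgebras

open Coalgebra HopfAlgebra LinearMap

variable {F : Type} [Field F] {B : Type} [Ring B] [HopfAlgebra F B]

lemma IsSubcoalgebra.apply_comul_eq_zero {C : Submodule F B} (hC : IsSubcoalgebra F B C)
    {N : Type*} [AddCommGroup N] [Module F N] {f : B ⊗[F] B →ₗ[F] N}
    (hf : ∀ a ∈ C, ∀ b ∈ C, f (a ⊗ₜ b) = 0) {x : B} (hx : x ∈ C) : f (comul x) = 0 := by
  have h : f ∘ₗ TensorProduct.map C.subtype C.subtype = 0 :=
    TensorProduct.ext' fun a b ↦ hf a a.2 b b.2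
  obtain ⟨t, ht⟩ := hC x hx
  rw [← ht, ← LinearMap.comp_apply, h, LinearMap.zero_apply]

lemma IsSubcoalgebra.leftHit_mem {C : Submodule F B} (hC : IsSubcoalgebra F B C)
    (φ : Module.Dual F B) {x : B} (hx : x ∈ C) : leftHit φ x ∈ C := by
  rw [← Submodule.Quotient.mk_eq_zero]
  exact hC.apply_comul_eq_zero (f := C.mkQ ∘ₗ TensorProduct.rid F B ∘ₗ φ.lTensor B)
    (fun a ha b _ ↦ by simp [(Submodule.Quotient.mk_eq_zero C).mpr ha]) hx

lemma IsSubcoalgebra.rightHit_mem {C : Submodule F B} (hC : IsSubcoalgebra F B C)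
    (φ : Module.Dual F B) {x : B} (hx : x ∈ C) : rightHit φ x ∈ C := by
  rw [← Submodule.Quotient.mk_eq_zero]
  exact hC.apply_comul_eq_zero (f := C.mkQ ∘ₗ TensorProduct.lid F B ∘ₗ φ.rTensor B)
    (fun a _ b hb ↦ by simp [(Submodule.Quotient.mk_eq_zero C).mpr hb]) hx

lemma isSubcoalgebra_of_hit_mem {C : Submodule F B}
    (hl : ∀ φ : Module.Dual F B, ∀ x ∈ C, leftHit φ x ∈ C)
    (hr : ∀ φ : Module.Dual F B, ∀ x ∈ C, rightHit φ x ∈ C) : IsSubcoalgebra F B C := by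
  intro x hx
  obtain ⟨p, hp⟩ := C.subtype.exists_leftInverse_of_injective C.ker_subtype
  set q : B →ₗ[F] B := C.subtype ∘ₗ p
  have q_eq (y : B) (hy : y ∈ C) : q y = y :=
    congrArg Subtype.val (LinearMap.congr_fun hp ⟨y, hy⟩)
  refine ⟨TensorProduct.map p p (comul x), ?_⟩
  rw [← LinearMap.comp_apply, ← TensorProduct.map_comp]
  refine eq_of_forall_rTensor_eq fun φ ↦ (TensorProduct.lid F B).injective ?_
  calc TensorProduct.lid F B (φ.rTensor B (TensorProduct.map q q (comul x)))
      = q (rightHit (φ ∘ₗ q) x) := by simp [rightHit, ← (ℛ F x).eq]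
    _ = rightHit (φ ∘ₗ q) x := q_eq _ (hr _ x hx)
    _ = rightHit φ x := by
        rw [← sub_eq_zero, ← Module.forall_dual_apply_eq_zero_iff F]
        intro f
        rw [map_sub, sub_eq_zero, ← apply_leftHit, ← apply_leftHit]
        exact congrArg φ (q_eq _ (hl f x hx))

lemma IsSubcoalgebra.inf {C D : Submodule F B} (hC : IsSubcoalgebra F B C)
    (hD : IsSubcoalgebra F B D) : IsSubcoalgebra F B (C ⊓ D) :=
  isSubcoalgebra_of_hit_mem (fun φ _ hx ↦ ⟨hC.leftHit_mem φ hx.1, hD.leftHit_mem φ hx.2⟩)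
    (fun φ _ hx ↦ ⟨hC.rightHit_mem φ hx.1, hD.rightHit_mem φ hx.2⟩)

lemma isSubcoalgebra_sSup {s : Set (Submodule F B)} (hs : ∀ C ∈ s, IsSubcoalgebra F B C) :
    IsSubcoalgebra F B (sSup s) := by
  have map_mem (T : Module.End F B) (hT : ∀ C ∈ s, ∀ x ∈ C, T x ∈ C) :
      ∀ x ∈ sSup s, T x ∈ sSup s :=
    (sSup_le fun C hC x hx ↦ le_sSup hC (hT C hC x hx) : _ ≤ (sSup s).comap T)
  exact isSubcoalgebra_of_hit_mem
    (fun φ ↦ map_mem _ fun C hC _ hx ↦ (hs C hC).leftHit_mem φ hx)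
    (fun φ ↦ map_mem _ fun C hC _ hx ↦ (hs C hC).rightHit_mem φ hx)

section HaarFunctional

/-- A Haar functional of a Hopf algebra: a two-sided integral of the dual which does not vanish
at `1`. -/
structure IsHaarFunctional (lam : Module.Dual F B) : Prop where
  isLeftIntegral : IsLeftIntegral lam
  isRightIntegral : IsRightIntegral lam
  apply_one_ne_zero : lam 1 ≠ 0

/-- The left orthogonal of `E` for the bilinear form `(x, y) ↦ λ(x S(y))`. -/
def antipodeOrthogonal (lam : Module.Dual F B) (E : Submodule F B) : Submodule F B where
  carrier := {x | ∀ y ∈ E, lam (x * antipode F y) = 0}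
  add_mem' ha hb y hy := by rw [add_mul, map_add, ha y hy, hb y hy, add_zero]
  zero_mem' y _ := by simp
  smul_mem' c x hx y hy := by rw [smul_mul_assoc, map_smul, hx y hy, smul_zero]

variable {lam : Module.Dual F B} {D E : Submodule F B}

lemma isSubcoalgebra_antipodeOrthogonal (hE : IsSubcoalgebra F B E) (h : IsHaarFunctional lam) :
    IsSubcoalgebra F B (antipodeOrthogonal lam E) := by
  refine isSubcoalgebra_of_hit_mem (fun φ x hx y hy ↦ ?_) (fun φ x hx y hy ↦ ?_)
  · calc (lam ∘ₗ mulRight F (antipode F y)) (leftHit φ x)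
        = φ (rightHit (lam ∘ₗ mulRight F (antipode F y)) x) := apply_leftHit _ _ _
      _ = (φ ∘ₗ antipode F ∘ₗ antipode F) (leftHit (lam ∘ₗ mulLeft F x ∘ₗ antipode F) y) := by
          rw [h.isRightIntegral.rightHit_comp_mulRight, rightHit_antipode]
          rfl
      _ = lam (x * antipode F (rightHit (φ ∘ₗ antipode F ∘ₗ antipode F) y)) :=
          apply_leftHit _ _ _
      _ = 0 := hx _ (hE.rightHit_mem _ hy)
  · calc (lam ∘ₗ mulRight F (antipode F y)) (rightHit φ x)
        = φ (leftHit (lam ∘ₗ mulRight F (antipode F y)) x) := (apply_leftHit _ _ _).symm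
      _ = φ (rightHit (lam ∘ₗ mulLeft F x ∘ₗ antipode F) y) := by
          rw [h.isLeftIntegral.leftHit_comp_mulRight_antipode]
      _ = lam (x * antipode F (leftHit φ y)) := (apply_leftHit _ _ _).symm
      _ = 0 := hx _ (hE.leftHit_mem _ hy)

lemma IsSubcoalgebra.le_antipodeOrthogonal (hD : IsSubcoalgebra F B D)
    (hE : IsSubcoalgebra F B E) (h : IsLeftIntegral lam) (hDE : D ⊓ E = ⊥) :
    D ≤ antipodeOrthogonal lam E := fun x hx y hy ↦ by
  have hmem : leftHit (lam ∘ₗ mulRight F (antipode F y)) x ∈ D ⊓ E := by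
    refine ⟨hD.leftHit_mem _ hx, ?_⟩
    rw [h.leftHit_comp_mulRight_antipode]
    exact hE.rightHit_mem _ hy
  rw [hDE, Submodule.mem_bot] at hmem
  have h_apply := apply_leftHit (counit (R := F)) (lam ∘ₗ mulRight F (antipode F y)) x
  rw [hmem, map_zero, rightHit_counit] at h_apply
  exact h_apply.symm

lemma IsSubcoalgebra.inf_antipodeOrthogonal_eq_bot (hE : IsSubcoalgebra F B E)
    (h : IsHaarFunctional lam) : E ⊓ antipodeOrthogonal lam E = ⊥ := by
  have hR := hE.inf (isSubcoalgebra_antipodeOrthogonal hE h)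
  have counit_eq_zero (x : B) (hx : x ∈ E ⊓ antipodeOrthogonal lam E) :
      counit (R := F) x = 0 := by
    have h0 := hR.apply_comul_eq_zero (f := lam ∘ₗ mul' F B ∘ₗ (antipode F).lTensor B)
      (fun a ha b hb ↦ by simpa using ha.2 b hb.1) hx
    simp only [LinearMap.comp_apply, mul_antipode_lTensor_comul_apply,
      Algebra.algebraMap_eq_smul_one, map_smul, smul_eq_mul] at h0
    exact (mul_eq_zero.mp h0).resolve_right h.apply_one_ne_zero
  rw [eq_bot_iff]
  intro x hx
  rw [Submodule.mem_bot, ← rightHit_counit (R := F) x]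
  exact hR.apply_comul_eq_zero
    (f := (TensorProduct.lid F B).toLinearMap ∘ₗ (counit (R := F)).rTensor B)
    (fun a ha b _ ↦ by simp [counit_eq_zero a ha]) hx

variable [FiniteDimensional F B]

lemma IsSubcoalgebra.sup_antipodeOrthogonal_eq_top (hE : IsSubcoalgebra F B E)
    (h : IsHaarFunctional lam) : E ⊔ antipodeOrthogonal lam E = ⊤ := by
  let T : B →ₗ[F] Module.Dual F E :=
    LinearMap.lcomp F F (antipode F ∘ₗ E.subtype) ∘ₗ LinearMap.compr₂ (LinearMap.mul F B) lam
  have mem_orthogonal {x : B} (hx : T x = 0) : x ∈ antipodeOrthogonal lam E :=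
    fun y hy ↦ LinearMap.congr_fun hx ⟨y, hy⟩
  have T_injective : Function.Injective (T ∘ₗ E.subtype) := by
    rw [injective_iff_map_eq_zero]
    intro e he
    have := hE.inf_antipodeOrthogonal_eq_bot h ▸ Submodule.mem_inf.mpr ⟨e.2, mem_orthogonal he⟩
    simpa using this
  have T_surjective := (LinearMap.injective_iff_surjective_of_finrank_eq_finrank
    (Subspace.dual_finrank_eq (K := F) (V := E)).symm).mp T_injective
  refine eq_top_iff.mpr fun x _ ↦ ?_
  obtain ⟨e, he⟩ := T_surjective (T x)
  refine Submodule.mem_sup.mpr ⟨e, e.2, x - e, mem_orthogonal ?_, add_sub_cancel _ _⟩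
  rw [map_sub, sub_eq_zero]
  exact he.symm

end HaarFunctional

variable [FiniteDimensional F B]

lemma IsSubcoalgebra.exists_isSimpleSubcoalgebra_le {R : Submodule F B}
    (hR : IsSubcoalgebra F B R) (hR0 : R ≠ ⊥) : ∃ C ≤ R, IsSimpleSubcoalgebra F B C := by
  obtain ⟨C, ⟨hCR, hC, hC0⟩, hmin⟩ := wellFounded_lt.has_min
    {C : Submodule F B | C ≤ R ∧ IsSubcoalgebra F B C ∧ C ≠ ⊥} ⟨R, le_rfl, hR, hR0⟩
  exact ⟨C, hCR, hC, hC0, fun D hDC hD hD0 ↦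
    eq_of_le_of_not_lt hDC (hmin D ⟨hDC.trans hCR, hD, hD0⟩)⟩

theorem IsSubcoalgebra.sSup_isSimpleSubcoalgebra_eq {lam : Module.Dual F B}
    (h : IsHaarFunctional lam) {D : Submodule F B} (hD : IsSubcoalgebra F B D) :
    sSup {C | IsSimpleSubcoalgebra F B C ∧ C ≤ D} = D := by
  set E := sSup {C | IsSimpleSubcoalgebra F B C ∧ C ≤ D}
  have hE : IsSubcoalgebra F B E := isSubcoalgebra_sSup fun C hC ↦ hC.1.1
  have hED : E ≤ D := sSup_le fun C hC ↦ hC.2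
  have inf_orthogonal : D ⊓ antipodeOrthogonal lam E = ⊥ := by
    by_contra hne
    obtain ⟨C, hCR, hC⟩ :=
      (hD.inf (isSubcoalgebra_antipodeOrthogonal hE h)).exists_isSimpleSubcoalgebra_le hne
    have hCE : C ≤ E := le_sSup ⟨hC, hCR.trans inf_le_left⟩
    have hC0 := le_inf hCE (hCR.trans inf_le_right)
    rw [hE.inf_antipodeOrthogonal_eq_bot h, le_bot_iff] at hC0
    exact hC.2.1 hC0
  refine eq_of_le_of_inf_le_of_sup_le (z := antipodeOrthogonal lam E) hED ?_ ?_
  · exact inf_orthogonal.le.trans bot_le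
  · exact le_top.trans (hE.sup_antipodeOrthogonal_eq_top h).ge

end Subcoalgebras

section Characters

open Coalgebra LinearMap

variable {F : Type} [Field F] {B : Type} [Ring B] [HopfAlgebra F B]

lemma isCocomm_of_apply_rightHit_comm {d : B}
    (h : ∀ φ ψ : Module.Dual F B, φ (rightHit ψ d) = ψ (rightHit φ d)) : IsCocomm F B d := by
  refine eq_of_forall_rTensor_eq fun φ ↦ (TensorProduct.lid F B).injective ?_
  calc TensorProduct.lid F B (φ.rTensor B (TensorProduct.comm F B B (comul d)))
      = leftHit φ d := by simp [leftHit, ← (ℛ F d).eq]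
    _ = rightHit φ d := by
        rw [← sub_eq_zero, ← Module.forall_dual_apply_eq_zero_iff F]
        intro ψ
        rw [map_sub, sub_eq_zero, apply_leftHit, h]

namespace IsSubcoalgebra

variable {D : Submodule F B} (hD : IsSubcoalgebra F B D)

/-- The action of the dual of `B` on a subcoalgebra `D` by right hits. -/
def rightHitEnd : Module.Dual F B →ₗ[F] Module.End F D where
  toFun φ := (rightHit φ).restrict fun _ hx ↦ hD.rightHit_mem φ hx
  map_add' φ ψ := by ext x; simp
  map_smul' c φ := by ext x; simp

lemma rightHitEnd_comp_rightHit (φ ψ : Module.Dual F B) :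
    hD.rightHitEnd (ψ ∘ₗ rightHit φ) = hD.rightHitEnd ψ * hD.rightHitEnd φ := by
  ext x
  exact (rightHit_rightHit φ ψ (x : B)).symm

lemma rightHitEnd_counit : hD.rightHitEnd counit = 1 := by
  ext x
  exact rightHit_counit _

lemma rightHitEnd_eq_zero {φ : Module.Dual F B} (hφ : D ≤ ker φ) : hD.rightHitEnd φ = 0 := by
  ext x
  exact hD.apply_comul_eq_zero (f := (TensorProduct.lid F B).toLinearMap ∘ₗ φ.rTensor B)
    (fun a ha b _ ↦ by simp [mem_ker.mp (hφ ha)]) x.2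

variable [FiniteDimensional F B]

/-- The character of a subcoalgebra `D`, as a comodule over `B`: the element of `B` on which a
functional takes the trace of its action on `D`. -/
def character : B :=
  (Module.evalEquiv F B).symm (LinearMap.trace F D ∘ₗ hD.rightHitEnd)

lemma apply_character (φ : Module.Dual F B) :
    φ hD.character = LinearMap.trace F D (hD.rightHitEnd φ) :=
  Module.apply_evalEquiv_symm_apply F B φ _

lemma character_mem : hD.character ∈ D := by
  by_contra hdD
  obtain ⟨φ, hφd, hφ⟩ := Submodule.exists_le_ker_of_notMem hdD
  exact hφd (by rw [apply_character, hD.rightHitEnd_eq_zero hφ, map_zero])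

lemma isCocomm_character : IsCocomm F B hD.character :=
  isCocomm_of_apply_rightHit_comm fun φ ψ ↦ by
    rw [← LinearMap.comp_apply φ, ← LinearMap.comp_apply ψ, apply_character, apply_character,
      rightHitEnd_comp_rightHit, rightHitEnd_comp_rightHit, LinearMap.trace_mul_comm]

lemma counit_character : counit (R := F) hD.character = Module.finrank F D := by
  rw [apply_character, rightHitEnd_counit, LinearMap.trace_one]

end IsSubcoalgebra

end Characters

section HopfSubalgebras

open Coalgebra HopfAlgebra LinearMap WithConv

lemma bialgHom_map_antipode {R A A' : Type*} [CommSemiring R] [Semiring A] [HopfAlgebra R A]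
    [Semiring A'] [HopfAlgebra R A'] (f : A →ₐc[R] A') (x : A) :
    f (antipode R x) = antipode R (f x) := by
  have f_antipode_mul : toConv ((f : A →ₗ[R] A') ∘ₗ antipode R) * toConv (f : A →ₗ[R] A') = 1 := by
    ext x
    rw [(ℛ R x).convMul_apply]
    simp only [LinearMap.comp_apply, LinearMap.coe_coe, ← map_mul, ← map_sum,
      sum_antipode_mul_eq_algebraMap_counit, convOne_apply]
    exact AlgHomClass.commutes f _
  have mul_antipode_f : toConv (f : A →ₗ[R] A') * toConv (antipode R ∘ₗ (f : A →ₗ[R] A')) = 1 := by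
    ext x
    rw [(ℛ R x).convMul_apply]
    simpa using sum_mul_antipode_eq_algebraMap_counit ((ℛ R x).induced f)
  exact congrArg (fun φ : WithConv (A →ₗ[R] A') ↦ φ x)
    (left_inv_eq_right_inv f_antipode_mul mul_antipode_f)

/-- Conjugation by an invertible group-like element. -/
def conjBialgHom {R A : Type*} [CommSemiring R] [Semiring A] [Bialgebra R A] {u : Aˣ}
    (hu : IsGroupLikeElem R u.val) : A →ₐc[R] A :=
  .ofAlgHom (MulSemiringAction.toAlgHom R A (ConjAct.toConjAct u))
    (by
      ext x
      simp [ConjAct.units_smul_def, Bialgebra.counit_mul, hu.counit_eq_one,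
        hu.unitsInv.counit_eq_one])
    (by
      ext x
      simp [ConjAct.units_smul_def, Bialgebra.comul_mul, hu.comul_eq_tmul_self,
        hu.unitsInv.comul_eq_tmul_self, ← (ℛ R x).eq, Finset.mul_sum, Finset.sum_mul])

lemma conjBialgHom_apply {R A : Type*} [CommSemiring R] [Semiring A] [Bialgebra R A] {u : Aˣ}
    (hu : IsGroupLikeElem R u.val) (x : A) : conjBialgHom hu x = u * x * u⁻¹.val :=
  rfl

variable {F : Type} [Field F] {B : Type} [Ring B] [HopfAlgebra F B]
  {K : Subalgebra F B} {Λ : B}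

lemma IsSubcoalgebra.map {B' : Type} [Ring B'] [HopfAlgebra F B'] {C : Submodule F B}
    (hC : IsSubcoalgebra F B C) (f : B →ₐc[F] B') :
    IsSubcoalgebra F B' (C.map (f : B →ₗ[F] B')) := by
  refine isSubcoalgebra_of_hit_mem ?_ ?_
  · rintro φ _ ⟨x, hx, rfl⟩
    refine ⟨_, hC.leftHit_mem (φ ∘ₗ f) hx, ?_⟩
    simp [leftHit, ← CoalgHomClass.map_comp_comul_apply, ← (ℛ F x).eq]
  · rintro φ _ ⟨x, hx, rfl⟩
    refine ⟨_, hC.rightHit_mem (φ ∘ₗ f) hx, ?_⟩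
    simp [rightHit, ← CoalgHomClass.map_comp_comul_apply, ← (ℛ F x).eq]

lemma IsHopfSubalgebra.map {B' : Type} [Ring B'] [HopfAlgebra F B']
    (hK : IsHopfSubalgebra F B K) (f : B →ₐc[F] B') :
    IsHopfSubalgebra F B' (K.map (f : B →ₐ[F] B')) := by
  refine ⟨hK.1.map f, ?_⟩
  rintro _ ⟨x, hx, rfl⟩
  exact ⟨antipode F x, hK.2 x hx, bialgHom_map_antipode f x⟩

lemma IsIdempotentIntegral.map {B' : Type} [Ring B'] [HopfAlgebra F B']
    (hΛ : IsIdempotentIntegral F B K Λ) (f : B →ₐc[F] B') :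
    IsIdempotentIntegral F B' (K.map (f : B →ₐ[F] B')) (f Λ) := by
  obtain ⟨hΛK, hεΛ, hΛint⟩ := hΛ
  refine ⟨⟨Λ, hΛK, rfl⟩, (CoalgHomClass.counit_comp_apply f Λ).trans hεΛ, ?_⟩
  rintro _ ⟨x, hx, rfl⟩
  have counit_fx : counit (R := F) (f x) = counit (R := F) x := CoalgHomClass.counit_comp_apply f x
  constructor
  · change f x * f Λ = counit (R := F) (f x) • f Λ
    rw [← map_mul, (hΛint x hx).1, map_smul, counit_fx]
  · change f Λ * f x = counit (R := F) (f x) • f Λ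
    rw [← map_mul, (hΛint x hx).2, map_smul, counit_fx]

end HopfSubalgebras

section Conjugates

open Coalgebra HopfAlgebra LinearMap

variable {F : Type} [Field F] {B : Type} [Ring B] [HopfAlgebra F B] {K : Subalgebra F B} {Λ : B}

lemma isGroupLikeElem_of_comul_eq {g : B} (hg0 : g ≠ 0)
    (hg : comul (R := F) g = g ⊗ₜ[F] g) : IsGroupLikeElem F g := by
  have h : counit (R := F) g • g = g := by simpa [rightHit, hg] using rightHit_counit (R := F) g
  exact ⟨smul_left_injective F hg0 (by simpa using h), hg⟩

lemma mul_conjBialgHom_eq_smul_iff {u : Bˣ} (hu : IsGroupLikeElem F u.val) (a : F) (x y : B) :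
    x * conjBialgHom hu y = a • conjBialgHom hu y ↔ x * (u * y) = a • (u * y) := by
  rw [conjBialgHom_apply, ← mul_assoc x (u * y), ← smul_mul_assoc]
  exact Units.mul_left_inj _

lemma conjK_span_singleton {c : B} (hc : IsCocomm F B c) :
    conjK F B K Λ (Submodule.span F {c}) = sSup {D | IsSimpleSubcoalgebra F B D ∧
      ∀ d ∈ D, IsCocomm F B d → d * (c * Λ) = counit (R := F) d • (c * Λ)} := by
  refine congrArg sSup (Set.ext fun D ↦ and_congr_right fun _ ↦ forall₃_congr fun d _ _ ↦ ?_)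
  refine ⟨fun h ↦ h c (Submodule.mem_span_singleton_self c) hc, ?_⟩
  rintro h _ hx -
  obtain ⟨a, rfl⟩ := Submodule.mem_span_singleton.mp hx
  rw [smul_mul_assoc, mul_smul_comm, h, smul_comm]

lemma IsIdempotentIntegral.ne_zero (hΛ : IsIdempotentIntegral F B K Λ) : Λ ≠ 0 := by
  rintro rfl
  simpa using hΛ.2.1

variable [FiniteDimensional F B] [IsSemisimpleRing B]

lemma IsHopfSubalgebra.map_antipode_eq (hK : IsHopfSubalgebra F B K) :
    K.toSubmodule.map (antipode F) = K.toSubmodule := by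
  obtain ⟨L, hL⟩ := exists_isNormalizedRightIntegral F B
  refine Submodule.eq_of_le_of_finrank_eq (Submodule.map_le_iff_le_comap.mpr hK.2) ?_
  exact (Submodule.equivMapOfInjective _ hL.antipode_injective K.toSubmodule).finrank_eq.symm

variable [CharZero F] [IsAlgClosed F]

lemma isHaarFunctional_antipodeTrace : IsHaarFunctional (antipodeTrace : Module.Dual F B) :=
  ⟨isLeftIntegral_antipodeTrace, isRightIntegral_antipodeTrace, antipodeTrace_one_ne_zero F B⟩

/-- If `D ∩ K = 0` then `λ(χ Λ) = 0` for the character `χ` of `D`, whereas `χ Λ = (dim D) Λ` and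
`λ(Λ) ≠ 0`. -/
lemma IsSimpleSubcoalgebra.le_of_character_mul_eq (hK : IsHopfSubalgebra F B K)
    (hΛ : IsIdempotentIntegral F B K Λ) {D : Submodule F B} (hD : IsSimpleSubcoalgebra F B D)
    (h : hD.1.character * Λ = counit (R := F) hD.1.character • Λ) : D ≤ K.toSubmodule := by
  have hlam := isHaarFunctional_antipodeTrace (F := F) (B := B)
  by_contra hDK
  have inf_eq_bot : D ⊓ K.toSubmodule = ⊥ :=
    by_contra fun hne ↦ hDK (inf_eq_left.mp (hD.2.2 _ inf_le_left (hD.1.inf hK.1) hne))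
  have apply_Λ : antipodeTrace (R := F) Λ = 0 := by
    obtain ⟨x, hx, hxΛ⟩ := hK.map_antipode_eq.ge hΛ.1
    have h0 := hD.1.le_antipodeOrthogonal hK.1 hlam.isLeftIntegral inf_eq_bot
      hD.1.character_mem x hx
    rw [hxΛ, h, map_smul, smul_eq_mul, hD.1.counit_character] at h0
    exact (mul_eq_zero.mp h0).resolve_left
      (Nat.cast_ne_zero.mpr (Submodule.finrank_eq_zero.not.mpr hD.2.1))
  have mem_orthogonal : Λ ∈ antipodeOrthogonal (antipodeTrace (R := F)) K.toSubmodule :=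
    fun y hy ↦ by rw [(hΛ.2.2 _ (hK.2 y hy)).2, map_smul, apply_Λ, smul_zero]
  exact hΛ.ne_zero ((Submodule.mem_bot F).mp
    (hK.1.inf_antipodeOrthogonal_eq_bot hlam ▸ ⟨hΛ.1, mem_orthogonal⟩))

theorem sSup_isSimpleSubcoalgebra_mul_eq (hK : IsHopfSubalgebra F B K)
    (hΛ : IsIdempotentIntegral F B K Λ) :
    sSup {D | IsSimpleSubcoalgebra F B D ∧
      ∀ d ∈ D, IsCocomm F B d → d * Λ = counit (R := F) d • Λ} = K.toSubmodule := by
  rw [← hK.1.sSup_isSimpleSubcoalgebra_eq isHaarFunctional_antipodeTrace]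
  refine congrArg sSup (Set.ext fun D ↦ and_congr_right fun hD ↦ ⟨fun h ↦ ?_, fun hDK d hd _ ↦ ?_⟩)
  · exact hD.le_of_character_mul_eq hK hΛ (h _ hD.1.character_mem hD.1.isCocomm_character)
  · exact (hΛ.2.2 d (hDK hd)).1

end Conjugates

/-- Proposition 28: if `C = k·g` for a grouplike element
`g ∈ G(H)` (with inverse `g'`), then the conjugate Hopf subalgebra `ᶜK`
equals `g·K·g⁻¹`. -/
theorem statement_9 (K : Subalgebra k H) (hK : IsHopfSubalgebra k H K)
    (Λ : H) (hΛ : IsIdempotentIntegral k H K Λ)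
    (g g' : H) (hg0 : g ≠ 0)
    (hg : Coalgebra.comul (R := k) g = g ⊗ₜ[k] g)
    (hgg' : g * g' = 1) (hg'g : g' * g = 1) :
    conjK k H K Λ (Submodule.span k {g}) =
      Submodule.map ((LinearMap.mulLeft k g).comp (LinearMap.mulRight k g'))
        K.toSubmodule := by
  have hgl : IsGroupLikeElem k g := isGroupLikeElem_of_comul_eq hg0 hg
  let u : Hˣ := ⟨g, g', hgg', hg'g⟩
  let f : H →ₐc[k] H := conjBialgHom (u := u) hgl
  have hg_cocomm : IsCocomm k H g := by simp [IsCocomm, hg]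
  have mul_iff (d : H) : d * (g * Λ) = Coalgebra.counit (R := k) d • (g * Λ) ↔
      d * f Λ = Coalgebra.counit (R := k) d • f Λ :=
    (mul_conjBialgHom_eq_smul_iff (u := u) hgl _ d Λ).symm
  have f_eq : (f : H →ₗ[k] H) = (LinearMap.mulLeft k g).comp (LinearMap.mulRight k g') :=
    LinearMap.ext fun x ↦ mul_assoc g x g'
  calc conjK k H K Λ (Submodule.span k {g})
      = (K.map (f : H →ₐ[k] H)).toSubmodule := by
        rw [conjK_span_singleton hg_cocomm]
        simp only [mul_iff]
        exact sSup_isSimpleSubcoalgebra_mul_eq (hK.map f) (hΛ.map f)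
    _ = _ := by rw [← f_eq]; rfl

end Statements

end

end MackeyPaper
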